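/- Let H be a Hopf algebra over a field k whose antipode S is bijective. On the vector space B := Hom_k(H, k) ⊗ H define a multiplication by (φ ⊗ h)·(φ' ⊗ h') = ψ ⊗ h₍₂₎h', where ψ ∈ Hom_k(H, k) is the linear functional ψ(x) = φ(x₍₁₎)·φ'(S^{-1}(h₍₃₎) x₍₂₎ S²(h₍₁₎)) (Sweedler notation, summation understood). Then this multiplication is associative and has unit ε ⊗ 1_H, so that B is an associative unital k-algebra. -/

import Mathlib

open TensorProduct

section Setup

variable (k : Type*) [Field k] (H : Type*) [Ring H] [HopfAlgebra k H]

/-- The iterated comultiplication `h ↦ h₍₁₎ ⊗ (h₍₂₎ ⊗ h₍₃₎)`. -/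
noncomputable def Delta2 : H →ₗ[k] H ⊗[k] (H ⊗[k] H) :=
  (LinearMap.lTensor H (Coalgebra.comul (R := k))) ∘ₗ (Coalgebra.comul (R := k))

/-- The antipode of `H`. -/
noncomputable def antS : H →ₗ[k] H := HopfAlgebra.antipode (R := k)

/-- The (two-sided) inverse of the antipode, which exists when the antipode is
bijective. -/
noncomputable def antSinv : H → H := Function.invFun (antS k H)

end Setup

/-!
Let `A = Hom(H, k)` with the convolution product. It is a module algebra over `K = H ⊗ Hᵐᵒᵖ` via
`((a ⊗ op c) · f) x = f (c x a)`. Since `S²` is a bialgebra endomorphism of `H` and `op ∘ S⁻¹` is an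
algebra homomorphism that reverses the comultiplication, `h ↦ (S² h₍₁₎ ⊗ op (S⁻¹ h₍₃₎)) ⊗ h₍₂₎`
makes `H` a `K`-comodule algebra, and `B` is the resulting smash product of `A` and `H`.

In the smash product of a `K`-module algebra `A` and a `K`-comodule algebra `U`, left multiplication
by `a ⊗ u` is the composite of operators `a` and `u` on `A ⊗ U`, each coming from an algebra
homomorphism. Associativity therefore reduces to the commutation rule
`u ∘ a = (u₍₋₁₎ · a) ∘ u₍₀₎`, which combines `k · (a b) = (k₍₁₎ · a) (k₍₂₎ · b)` with the
coassociativity of the coaction.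
-/

section SmashProduct

variable {R K A U : Type*} [CommSemiring R] [Semiring K] [Algebra R K] [Coalgebra R K]
  [Semiring A] [Algebra R A] [Semiring U] [Algebra R U]

variable (R K A) in
/-- A (left) `K`-module algebra structure on `A`, for an algebra `K` with a coalgebra structure:
`k · (a b) = (k₍₁₎ · a) (k₍₂₎ · b)` and `k · 1 = ε(k) 1`. -/
structure ModuleAlgebra where
  act : K →ₐ[R] Module.End R A
  act_one (k : K) : act k 1 = Coalgebra.counit (R := R) k • 1
  act_mul (k : K) (a b : A) : act k (a * b) = LinearMap.mul' R A
    (TensorProduct.map (act.toLinearMap.flip a) (act.toLinearMap.flip b) (Coalgebra.comul k))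

variable (R K U) in
/-- A (left) `K`-comodule algebra structure on `U`: a coassociative and counital coaction
`u ↦ u₍₋₁₎ ⊗ u₍₀₎` that is an algebra homomorphism. -/
structure ComoduleAlgebra where
  coact : U →ₐ[R] K ⊗[R] U
  coassoc (u : U) : (Coalgebra.comul (R := R)).rTensor U (coact u) =
    (TensorProduct.assoc R K K U).symm (coact.toLinearMap.lTensor K (coact u))
  counit_coact (u : U) : (Coalgebra.counit (R := R)).rTensor U (coact u) = 1 ⊗ₜ u

namespace ModuleAlgebra

variable (M : ModuleAlgebra R K A) (C : ComoduleAlgebra R K U)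

variable (R A U) in
/-- The left multiplication `a ↦ (b ⊗ u ↦ a b ⊗ u)` of `A` on the first factor of `A ⊗ U`. -/
noncomputable def mulLeftAlgHom : A →ₐ[R] Module.End R (A ⊗[R] U) :=
  (Module.endTensorEndAlgHom (R := R) (S := R) (A := R)).comp
    (Algebra.TensorProduct.includeLeft.comp (Algebra.lmul R A))

variable (U) in
/-- The action `(k ⊗ u) · (a ⊗ v) = (k · a) ⊗ u v` of `K ⊗ U` on `A ⊗ U`. -/
noncomputable def actMulAlgHom : K ⊗[R] U →ₐ[R] Module.End R (A ⊗[R] U) :=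
  (Module.endTensorEndAlgHom (R := R) (S := R) (A := R)).comp
    (Algebra.TensorProduct.map M.act (Algebra.lmul R U))

/-- The action `u · (a ⊗ v) = (u₍₋₁₎ · a) ⊗ u₍₀₎ v` of `U` on `A ⊗ U`, which will be left
multiplication by `1 ⊗ u` in the smash product. -/
noncomputable def coactMulAlgHom : U →ₐ[R] Module.End R (A ⊗[R] U) :=
  (M.actMulAlgHom U).comp C.coact

/-- The smash product multiplication `(a ⊗ u) (b ⊗ v) = a (u₍₋₁₎ · b) ⊗ u₍₀₎ v` on `A ⊗ U`. -/
noncomputable def smashMul : A ⊗[R] U →ₗ[R] Module.End R (A ⊗[R] U) :=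
  LinearMap.mul' R _ ∘ₗ
    TensorProduct.map (mulLeftAlgHom R A U).toLinearMap (M.coactMulAlgHom C).toLinearMap

@[simp]
theorem mulLeftAlgHom_tmul (a b : A) (u : U) :
    mulLeftAlgHom R A U a (b ⊗ₜ u) = (a * b) ⊗ₜ u := rfl

@[simp]
theorem actMulAlgHom_tmul (k : K) (a : A) (u v : U) :
    M.actMulAlgHom U (k ⊗ₜ u) (a ⊗ₜ v) = M.act k a ⊗ₜ (u * v) := rfl

theorem coactMulAlgHom_apply (u : U) :
    M.coactMulAlgHom C u = M.actMulAlgHom U (C.coact u) := rfl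

@[simp]
theorem smashMul_tmul (a : A) (u : U) :
    M.smashMul C (a ⊗ₜ u) = mulLeftAlgHom R A U a * M.coactMulAlgHom C u := rfl

theorem coactMulAlgHom_one_tmul_one (u : U) : M.coactMulAlgHom C u (1 ⊗ₜ 1) = 1 ⊗ₜ u := by
  have eval_actMul (t : K ⊗[R] U) : M.actMulAlgHom U t (1 ⊗ₜ 1) =
      TensorProduct.map (Algebra.linearMap R A) LinearMap.id
        ((Coalgebra.counit (R := R)).rTensor U t) := by
    induction t with
    | zero => simp
    | add s t hs ht => simp only [map_add, LinearMap.add_apply, hs, ht]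
    | tmul k u => simp [act_one, Algebra.algebraMap_eq_smul_one]
  rw [coactMulAlgHom_apply, eval_actMul, C.counit_coact]
  simp

theorem smashMul_mulLeftAlgHom (a : A) (x : A ⊗[R] U) :
    M.smashMul C (mulLeftAlgHom R A U a x) = mulLeftAlgHom R A U a * M.smashMul C x := by
  induction x with
  | zero => simp
  | add x y hx hy => simp only [map_add, hx, hy, mul_add]
  | tmul b u => simp [mul_assoc]

theorem smashMul_actMulAlgHom_tmul (t : K ⊗[R] U) (a : A) (u : U) :
    M.smashMul C (M.actMulAlgHom U t (a ⊗ₜ u)) =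
      M.smashMul C (M.actMulAlgHom U t (a ⊗ₜ 1)) * M.coactMulAlgHom C u := by
  induction t with
  | zero => simp
  | add s t hs ht => simp only [map_add, LinearMap.add_apply, hs, ht, add_mul]
  | tmul k v => simp [mul_assoc]

theorem actMulAlgHom_mul_mulLeftAlgHom (t : K ⊗[R] U) (a : A) :
    M.actMulAlgHom U t * mulLeftAlgHom R A U a =
      LinearMap.mul' R _ (TensorProduct.map
        ((mulLeftAlgHom R A U).toLinearMap ∘ₗ M.act.toLinearMap.flip a)
        (M.actMulAlgHom U).toLinearMap
        (TensorProduct.assoc R K K U ((Coalgebra.comul (R := R)).rTensor U t))) := by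
  induction t with
  | zero => simp
  | add s t hs ht => simp only [map_add, add_mul, hs, ht]
  | tmul k u =>
    obtain ⟨n, l, r, hk⟩ := TensorProduct.exists_sum_tmul_eq (Coalgebra.comul (R := R) k)
    ext b v
    simp [act_mul, hk, TensorProduct.sum_tmul]

theorem coactMulAlgHom_mul_mulLeftAlgHom (u : U) (a : A) :
    M.coactMulAlgHom C u * mulLeftAlgHom R A U a =
      M.smashMul C (M.coactMulAlgHom C u (a ⊗ₜ 1)) := by
  have smash_actMul (t : K ⊗[R] U) : M.smashMul C (M.actMulAlgHom U t (a ⊗ₜ 1)) =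
      LinearMap.mul' R _ (TensorProduct.map
        ((mulLeftAlgHom R A U).toLinearMap ∘ₗ M.act.toLinearMap.flip a)
        (M.actMulAlgHom U).toLinearMap (C.coact.toLinearMap.lTensor K t)) := by
    induction t with
    | zero => simp
    | add s t hs ht => simp only [map_add, LinearMap.add_apply, hs, ht]
    | tmul k v => simp [coactMulAlgHom_apply]
  rw [coactMulAlgHom_apply, actMulAlgHom_mul_mulLeftAlgHom, C.coassoc,
    LinearEquiv.apply_symm_apply, smash_actMul]

theorem smashMul_coactMulAlgHom (u : U) (x : A ⊗[R] U) :
    M.smashMul C (M.coactMulAlgHom C u x) = M.coactMulAlgHom C u * M.smashMul C x := by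
  induction x with
  | zero => simp
  | add x y hx hy => simp only [map_add, hx, hy, mul_add]
  | tmul a v =>
    rw [smashMul_tmul, ← mul_assoc, coactMulAlgHom_mul_mulLeftAlgHom, coactMulAlgHom_apply,
      smashMul_actMulAlgHom_tmul]

theorem smashMul_smashMul (x y : A ⊗[R] U) :
    M.smashMul C (M.smashMul C x y) = M.smashMul C x * M.smashMul C y := by
  induction x with
  | zero => simp
  | add x x' hx hx' => simp only [map_add, LinearMap.add_apply, hx, hx', add_mul]
  | tmul a u =>
    rw [smashMul_tmul, Module.End.mul_apply, smashMul_mulLeftAlgHom, smashMul_coactMulAlgHom,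
      mul_assoc]

theorem smashMul_one : M.smashMul C (1 ⊗ₜ 1) = 1 := by simp

theorem smashMul_apply_one (x : A ⊗[R] U) : M.smashMul C x (1 ⊗ₜ 1) = x := by
  induction x with
  | zero => simp
  | add x y hx hy => simp only [map_add, LinearMap.add_apply, hx, hy]
  | tmul a u => simp [coactMulAlgHom_one_tmul_one]

end ModuleAlgebra

end SmashProduct

section Translation

open WithConv

variable (R H T : Type*) [CommSemiring R] [Semiring H] [Algebra R H] [AddCommMonoid T] [Module R T]

/-- The action `(a · f) x = f (x * a)` of `H` on linear maps out of `H`. -/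
noncomputable def precompMulRight : H →ₐ[R] Module.End R (WithConv (H →ₗ[R] T)) :=
  .ofLinearMap
    (LinearMap.mk₂ R (fun a f ↦ toConv (f.ofConv ∘ₗ LinearMap.mulRight R a))
      (fun _ _ _ ↦ by ext; simp [mul_add]) (fun _ _ _ ↦ by ext; simp)
      (fun _ _ _ ↦ by ext; simp) (fun _ _ _ ↦ by ext; simp))
    (by ext; simp) (fun _ _ ↦ by ext; simp [mul_assoc])

/-- The action `(op c · f) x = f (c * x)` of `Hᵐᵒᵖ` on linear maps out of `H`. -/
noncomputable def precompMulLeft : Hᵐᵒᵖ →ₐ[R] Module.End R (WithConv (H →ₗ[R] T)) :=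
  .ofLinearMap
    (LinearMap.mk₂ R (fun c f ↦ toConv (f.ofConv ∘ₗ LinearMap.mulLeft R c.unop))
      (fun _ _ _ ↦ by ext; simp [add_mul]) (fun _ _ _ ↦ by ext; simp)
      (fun _ _ _ ↦ by ext; simp) (fun _ _ _ ↦ by ext; simp))
    (by ext; simp) (fun _ _ ↦ by ext; simp)

variable {R H T} in
theorem commute_precompMulRight_precompMulLeft (a : H) (c : Hᵐᵒᵖ) :
    Commute (precompMulRight R H T a) (precompMulLeft R H T c) := by
  ext f x
  exact congrArg f.ofConv (mul_assoc c.unop x a).symm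

/-- The action `((a ⊗ op c) · f) x = f (c * x * a)` of `H ⊗ Hᵐᵒᵖ` on linear maps out of `H`. -/
noncomputable def precompMulMul : H ⊗[R] Hᵐᵒᵖ →ₐ[R] Module.End R (WithConv (H →ₗ[R] T)) :=
  Algebra.TensorProduct.lift (precompMulRight R H T) (precompMulLeft R H T)
    commute_precompMulRight_precompMulLeft

variable {R H T} in
@[simp]
theorem precompMulMul_tmul_apply (a : H) (c : Hᵐᵒᵖ) (f : WithConv (H →ₗ[R] T)) (x : H) :
    precompMulMul R H T (a ⊗ₜ c) f x = f (c.unop * x * a) := by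
  rw [precompMulMul, Algebra.TensorProduct.lift_tmul, mul_assoc]
  rfl

end Translation

section ConvolutionModuleAlgebra

open WithConv

variable {R H T : Type*} [CommSemiring R] [Semiring H] [Bialgebra R H] [Semiring T] [Algebra R T]

theorem precompMulMul_one (k : H ⊗[R] Hᵐᵒᵖ) :
    precompMulMul R H T k 1 = Coalgebra.counit (R := R) k • 1 := by
  induction k with
  | zero => simp
  | add k l hk hl => simp only [map_add, LinearMap.add_apply, add_smul, hk, hl]
  | tmul a c =>
    ext x
    rw [precompMulMul_tmul_apply, ofConv_smul, LinearMap.smul_apply, LinearMap.convOne_apply,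
      LinearMap.convOne_apply, Algebra.smul_def, ← map_mul]
    simp [MulOpposite.counit_def, mul_right_comm]

theorem precompMulMul_mul (k : H ⊗[R] Hᵐᵒᵖ) (f g : WithConv (H →ₗ[R] T)) :
    precompMulMul R H T k (f * g) = LinearMap.mul' R _ (TensorProduct.map
      ((precompMulMul R H T).toLinearMap.flip f) ((precompMulMul R H T).toLinearMap.flip g)
      (Coalgebra.comul k)) := by
  induction k with
  | zero => simp
  | add k l hk hl => simp only [map_add, LinearMap.add_apply, hk, hl]
  | tmul a c =>
    obtain ⟨m, a₁, a₂, ha⟩ := TensorProduct.exists_sum_tmul_eq (Coalgebra.comul (R := R) a)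
    obtain ⟨n, c₁, c₂, hc⟩ := TensorProduct.exists_sum_tmul_eq (Coalgebra.comul (R := R) c.unop)
    ext x
    obtain ⟨p, x₁, x₂, hx⟩ := TensorProduct.exists_sum_tmul_eq (Coalgebra.comul (R := R) x)
    simpa [MulOpposite.comul_def, TensorProduct.comul_tmul, ha, hc, hx, TensorProduct.sum_tmul,
      TensorProduct.tmul_sum, Finset.sum_mul, Finset.mul_sum] using
      (Finset.sum_congr rfl fun _ _ ↦ Finset.sum_comm).trans Finset.sum_comm

variable (R H T) in
/-- The convolution algebra `Hom(H, T)` as a module algebra over `H ⊗ Hᵐᵒᵖ`. -/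
noncomputable def convModuleAlgebra : ModuleAlgebra R (H ⊗[R] Hᵐᵒᵖ) (WithConv (H →ₗ[R] T)) where
  act := precompMulMul R H T
  act_one := precompMulMul_one
  act_mul := precompMulMul_mul

theorem convMul_precompMulMul_apply {f g : WithConv (H →ₗ[R] T)} {a : H} {c : Hᵐᵒᵖ} {x : H} {n : ℕ}
    {x₁ x₂ : Fin n → H} (hx : Coalgebra.comul (R := R) x = ∑ j, x₁ j ⊗ₜ[R] x₂ j) :
    (f * precompMulMul R H T (a ⊗ₜ c) g) x = ∑ j, f (x₁ j) * g (c.unop * x₂ j * a) := by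
  simp [hx]

end ConvolutionModuleAlgebra

section TwoSidedCoaction

/-- The reassociation `(a₁ ⊗ a₂) ⊗ (v ⊗ (c₁ ⊗ c₂)) ↦ a₁ ⊗ ((a₂ ⊗ (v ⊗ c₁)) ⊗ c₂)`, which turns
the two sides of a tensor into two nested layers around `v`. -/
noncomputable def nestTensor (R M V : Type*) [CommSemiring R] [AddCommMonoid M] [Module R M]
    [AddCommMonoid V] [Module R V] :
    (M ⊗[R] M) ⊗[R] (V ⊗[R] (M ⊗[R] M)) →ₗ[R] M ⊗[R] ((M ⊗[R] (V ⊗[R] M)) ⊗[R] M) :=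
  ((TensorProduct.assoc R M (V ⊗[R] M) M).symm.toLinearMap ∘ₗ
      (TensorProduct.assoc R V M M).symm.toLinearMap.lTensor M).lTensor M ∘ₗ
    (TensorProduct.assoc R M M (V ⊗[R] (M ⊗[R] M))).toLinearMap

@[simp]
theorem nestTensor_tmul {R M V : Type*} [CommSemiring R] [AddCommMonoid M] [Module R M]
    [AddCommMonoid V] [Module R V] (a₁ a₂ c₁ c₂ : M) (v : V) :
    nestTensor R M V ((a₁ ⊗ₜ a₂) ⊗ₜ (v ⊗ₜ (c₁ ⊗ₜ c₂))) = a₁ ⊗ₜ ((a₂ ⊗ₜ (v ⊗ₜ c₁)) ⊗ₜ c₂) := rfl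

section OuterLeft

variable {R H K L V W : Type*} [CommSemiring R] [Semiring H] [Algebra R H]
  [Semiring K] [Algebra R K] [Semiring L] [Algebra R L]
  [Semiring V] [Algebra R V] [Semiring W] [Algebra R W]
  (α : H →ₐ[R] K) (β : H →ₐ[R] L)

variable (V) in
/-- The algebra homomorphism `a ⊗ (v ⊗ c) ↦ (α a ⊗ β c) ⊗ v`, which collects the outer factors
to the left of the middle one. -/
noncomputable def outerLeft : H ⊗[R] (V ⊗[R] H) →ₐ[R] (K ⊗[R] L) ⊗[R] V :=
  (Algebra.TensorProduct.assoc R R R K L V).symm.toAlgHom.comp <|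
    Algebra.TensorProduct.map α
      ((Algebra.TensorProduct.map β (.id R V)).comp (Algebra.TensorProduct.comm R V H).toAlgHom)

@[simp]
theorem outerLeft_tmul (a c : H) (v : V) :
    outerLeft V α β (a ⊗ₜ (v ⊗ₜ c)) = (α a ⊗ₜ β c) ⊗ₜ v := rfl

theorem lTensor_comp_outerLeft (f : V →ₗ[R] W) :
    f.lTensor (K ⊗[R] L) ∘ₗ (outerLeft V α β).toLinearMap =
      (outerLeft W α β).toLinearMap ∘ₗ (f.rTensor H).lTensor H := by
  ext a v c
  rfl

end OuterLeft

variable {R H K L V : Type*} [CommSemiring R] [Semiring H] [Bialgebra R H]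
  [Semiring K] [Algebra R K] [Coalgebra R K] [Semiring L] [Algebra R L] [Coalgebra R L]
  [Semiring V] [Algebra R V] {α : H →ₐ[R] K} {β : H →ₐ[R] L}

variable (R H) in
/-- The iterated comultiplication `h ↦ h₍₁₎ ⊗ (h₍₂₎ ⊗ h₍₃₎)` as an algebra homomorphism. -/
noncomputable def comul₂ : H →ₐ[R] H ⊗[R] (H ⊗[R] H) :=
  (Algebra.TensorProduct.map (.id R H) (Bialgebra.comulAlgHom R H)).comp
    (Bialgebra.comulAlgHom R H)

theorem comul₂_toLinearMap : (comul₂ R H).toLinearMap =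
    Coalgebra.comul.lTensor H ∘ₗ Coalgebra.comul := rfl

theorem comul₂_coassoc :
    ((comul₂ R H).toLinearMap.rTensor H).lTensor H ∘ₗ (comul₂ R H).toLinearMap =
      nestTensor R H H ∘ₗ TensorProduct.map Coalgebra.comul (Coalgebra.comul.lTensor H) ∘ₗ
        (comul₂ R H).toLinearMap := by
  simp only [comul₂_toLinearMap, nestTensor, coassoc_simps]

theorem lTensor_rid_lTensor_counit_comp_comul₂ :
    ((TensorProduct.rid R H).toLinearMap ∘ₗ Coalgebra.counit.lTensor H).lTensor H ∘ₗ
      (comul₂ R H).toLinearMap = Coalgebra.comul := by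
  rw [comul₂_toLinearMap, ← LinearMap.comp_assoc, ← LinearMap.lTensor_comp, LinearMap.comp_assoc,
    Coalgebra.lTensor_counit_comp_comul]
  convert LinearMap.id_comp _
  ext
  simp

theorem rTensor_counit_comp_outerLeft
    (counit_α : Coalgebra.counit ∘ₗ α.toLinearMap = Coalgebra.counit (R := R))
    (counit_β : Coalgebra.counit ∘ₗ β.toLinearMap = Coalgebra.counit (R := R)) :
    Coalgebra.counit.rTensor V ∘ₗ (outerLeft V α β).toLinearMap =
      TensorProduct.map Coalgebra.counit
        ((TensorProduct.rid R V).toLinearMap ∘ₗ Coalgebra.counit.lTensor V) := by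
  have counit_α_apply (a : H) : Coalgebra.counit (α a) = Coalgebra.counit (R := R) a :=
    congr($counit_α a)
  have counit_β_apply (c : H) : Coalgebra.counit (β c) = Coalgebra.counit (R := R) c :=
    congr($counit_β c)
  ext a v c
  simp [counit_α_apply, counit_β_apply, TensorProduct.smul_tmul']

theorem rTensor_comul_comp_outerLeft
    (comul_α : Coalgebra.comul ∘ₗ α.toLinearMap =
      TensorProduct.map α.toLinearMap α.toLinearMap ∘ₗ Coalgebra.comul (R := R))
    (comul_β : Coalgebra.comul ∘ₗ β.toLinearMap = TensorProduct.map β.toLinearMap β.toLinearMap ∘ₗ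
      (TensorProduct.comm R H H).toLinearMap ∘ₗ Coalgebra.comul (R := R)) :
    (Coalgebra.comul (R := R)).rTensor V ∘ₗ (outerLeft V α β).toLinearMap =
      (TensorProduct.assoc R _ _ V).symm.toLinearMap ∘ₗ
      (outerLeft V α β).toLinearMap.lTensor (K ⊗[R] L) ∘ₗ
      (outerLeft (H ⊗[R] (V ⊗[R] H)) α β).toLinearMap ∘ₗ
      nestTensor R H V ∘ₗ TensorProduct.map Coalgebra.comul (Coalgebra.comul.lTensor V) := by
  have comul_α_apply (a : H) : Coalgebra.comul (α a) = _ := congr($comul_α a)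
  have comul_β_apply (c : H) : Coalgebra.comul (β c) = _ := congr($comul_β c)
  ext a v c
  obtain ⟨m, a₁, a₂, ha⟩ := TensorProduct.exists_sum_tmul_eq (Coalgebra.comul (R := R) a)
  obtain ⟨n, c₁, c₂, hc⟩ := TensorProduct.exists_sum_tmul_eq (Coalgebra.comul (R := R) c)
  simp [TensorProduct.comul_tmul, comul_α_apply, comul_β_apply, ha, hc, TensorProduct.sum_tmul,
    TensorProduct.tmul_sum]

theorem rTensor_comul_comp_outerLeft_comp_comul₂
    (comul_α : Coalgebra.comul ∘ₗ α.toLinearMap =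
      TensorProduct.map α.toLinearMap α.toLinearMap ∘ₗ Coalgebra.comul (R := R))
    (comul_β : Coalgebra.comul ∘ₗ β.toLinearMap = TensorProduct.map β.toLinearMap β.toLinearMap ∘ₗ
      (TensorProduct.comm R H H).toLinearMap ∘ₗ Coalgebra.comul (R := R)) :
    (Coalgebra.comul (R := R)).rTensor H ∘ₗ
        (outerLeft H α β).toLinearMap ∘ₗ (comul₂ R H).toLinearMap =
      (TensorProduct.assoc R _ _ H).symm.toLinearMap ∘ₗ
        ((outerLeft H α β).toLinearMap ∘ₗ (comul₂ R H).toLinearMap).lTensor (K ⊗[R] L) ∘ₗ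
        (outerLeft H α β).toLinearMap ∘ₗ (comul₂ R H).toLinearMap := by
  rw [← LinearMap.comp_assoc, rTensor_comul_comp_outerLeft comul_α comul_β, LinearMap.lTensor_comp]
  simp only [LinearMap.comp_assoc]
  rw [← comul₂_coassoc, ← LinearMap.comp_assoc (comul₂ R H).toLinearMap, ← lTensor_comp_outerLeft,
    LinearMap.comp_assoc]

/-- The coaction `h ↦ (α h₍₁₎ ⊗ β h₍₃₎) ⊗ h₍₂₎` of `K ⊗ L` on `H`, where `α` is a homomorphism of
coalgebras and `β` an antihomomorphism. -/
noncomputable def twoSidedComoduleAlgebra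
    (counit_α : Coalgebra.counit ∘ₗ α.toLinearMap = Coalgebra.counit (R := R))
    (counit_β : Coalgebra.counit ∘ₗ β.toLinearMap = Coalgebra.counit (R := R))
    (comul_α : Coalgebra.comul ∘ₗ α.toLinearMap =
      TensorProduct.map α.toLinearMap α.toLinearMap ∘ₗ Coalgebra.comul (R := R))
    (comul_β : Coalgebra.comul ∘ₗ β.toLinearMap = TensorProduct.map β.toLinearMap β.toLinearMap ∘ₗ
      (TensorProduct.comm R H H).toLinearMap ∘ₗ Coalgebra.comul (R := R)) :
    ComoduleAlgebra R (K ⊗[R] L) H where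
  coact := (outerLeft H α β).comp (comul₂ R H)
  coassoc h := congr($(rTensor_comul_comp_outerLeft_comp_comul₂ comul_α comul_β) h)
  counit_coact h :=
    calc
      _ = TensorProduct.map Coalgebra.counit ((TensorProduct.rid R H).toLinearMap ∘ₗ
            Coalgebra.counit.lTensor H) (comul₂ R H h) :=
        congr($(rTensor_counit_comp_outerLeft counit_α counit_β) (comul₂ R H h))
      _ = Coalgebra.counit.rTensor H (Coalgebra.comul h) := by
        rw [← LinearMap.rTensor_comp_lTensor]
        exact congr(Coalgebra.counit.rTensor H ($lTensor_rid_lTensor_counit_comp_comul₂ h))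
      _ = 1 ⊗ₜ h := Coalgebra.rTensor_counit_comul h

end TwoSidedCoaction

section Antipode

open HopfAlgebra LinearMap WithConv

variable {R H : Type*} [CommSemiring R] [Semiring H] [HopfAlgebra R H]

theorem toConv_comp_antipode_mul_toConv {B : Type*} [Semiring B] [Algebra R B] (f : H →ₐ[R] B) :
    toConv (f.toLinearMap ∘ₗ antipode R) * toConv f.toLinearMap = 1 := by
  have comp_convMul := algHom_comp_convMul_distrib f (toConv (antipode R (A := H))) (toConv .id)
  rw [antipode_mul_id, ofConv_toConv, comp_id] at comp_convMul
  ext x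
  simpa using congr($comp_convMul.symm x)

theorem comul_comp_antipode :
    Coalgebra.comul ∘ₗ antipode R = TensorProduct.map (antipode R) (antipode R) ∘ₗ
      (TensorProduct.comm R H H).toLinearMap ∘ₗ Coalgebra.comul := by
  -- Both sides are convolution inverses of the comultiplication.
  let inl : H →ₐ[R] H ⊗[R] H := Algebra.TensorProduct.includeLeft
  let inr : H →ₐ[R] H ⊗[R] H := Algebra.TensorProduct.includeRight
  have comul_eq : toConv (Coalgebra.comul (R := R) (A := H)) =
      toConv inl.toLinearMap * toConv inr.toLinearMap := by
    ext x
    obtain ⟨n, x₁, x₂, hx⟩ := TensorProduct.exists_sum_tmul_eq (Coalgebra.comul (R := R) x)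
    simp [hx, inl, inr]
  have map_antipode_eq : toConv (TensorProduct.map (antipode R) (antipode R) ∘ₗ
        (TensorProduct.comm R H H).toLinearMap ∘ₗ Coalgebra.comul) =
      toConv (inr.toLinearMap ∘ₗ antipode R) * toConv (inl.toLinearMap ∘ₗ antipode R) := by
    ext x
    obtain ⟨n, x₁, x₂, hx⟩ := TensorProduct.exists_sum_tmul_eq (Coalgebra.comul (R := R) x)
    simp [hx, inl, inr]
  refine toConv_injective (left_inv_eq_right_inv ?_ comul_right_inv).symm
  rw [map_antipode_eq, comul_eq, mul_assoc, ← mul_assoc (toConv (inl.toLinearMap ∘ₗ antipode R)),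
    toConv_comp_antipode_mul_toConv, one_mul, toConv_comp_antipode_mul_toConv]

theorem comul_antipode (h : H) :
    Coalgebra.comul (antipode R h) = TensorProduct.map (antipode R) (antipode R)
      (TensorProduct.comm R H H (Coalgebra.comul h)) :=
  congr($comul_comp_antipode h)

variable (R H) in
/-- The square of the antipode as an algebra homomorphism. -/
noncomputable def antipodeSq : H →ₐ[R] H :=
  .ofLinearMap (antipode R ∘ₗ antipode R) (by simp) (by simp [antipode_mul_antidistrib])

@[simp]
theorem antipodeSq_apply (h : H) : antipodeSq R H h = antipode R (antipode R h) := rfl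

theorem counit_comp_antipodeSq :
    Coalgebra.counit ∘ₗ (antipodeSq R H).toLinearMap = Coalgebra.counit (R := R) := by
  ext h
  simp

theorem comul_comp_antipodeSq :
    Coalgebra.comul ∘ₗ (antipodeSq R H).toLinearMap =
      TensorProduct.map (antipodeSq R H).toLinearMap (antipodeSq R H).toLinearMap ∘ₗ
        Coalgebra.comul (R := R) := by
  ext h
  obtain ⟨n, h₁, h₂, hh⟩ := TensorProduct.exists_sum_tmul_eq (Coalgebra.comul (R := R) h)
  simp [comul_antipode, hh]

/-- The inverse of a bijective antipode as an algebra homomorphism `h ↦ op (S⁻¹ h)` to the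
opposite algebra. -/
noncomputable def opAntipodeInv (hS : Function.Bijective (antipode R (A := H))) :
    H →ₐ[R] Hᵐᵒᵖ :=
  AlgEquiv.opComm (AlgEquiv.ofBijective (antipodeAlgHomOp R H)
    (MulOpposite.op_bijective.comp hS)) |>.symm.toAlgHom

variable (hS : Function.Bijective (antipode R (A := H)))

@[simp]
theorem opAntipodeInv_antipode (h : H) :
    opAntipodeInv hS (antipode R h) = MulOpposite.op h :=
  (AlgEquiv.symm_apply_eq _).2 rfl

theorem unop_opAntipodeInv (h : H) :
    (opAntipodeInv hS h).unop = Function.invFun (antipode R) h := by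
  obtain ⟨x, rfl⟩ := hS.2 h
  rw [opAntipodeInv_antipode, Function.leftInverse_invFun hS.1, MulOpposite.unop_op]

theorem counit_comp_opAntipodeInv :
    Coalgebra.counit ∘ₗ (opAntipodeInv hS).toLinearMap = Coalgebra.counit (R := R) := by
  ext h
  obtain ⟨x, rfl⟩ := hS.2 h
  simp [MulOpposite.counit_def]

theorem comul_comp_opAntipodeInv :
    Coalgebra.comul ∘ₗ (opAntipodeInv hS).toLinearMap =
      TensorProduct.map (opAntipodeInv hS).toLinearMap (opAntipodeInv hS).toLinearMap ∘ₗ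
        (TensorProduct.comm R H H).toLinearMap ∘ₗ Coalgebra.comul (R := R) := by
  ext h
  obtain ⟨x, rfl⟩ := hS.2 h
  obtain ⟨n, x₁, x₂, hx⟩ := TensorProduct.exists_sum_tmul_eq (Coalgebra.comul (R := R) x)
  simp [MulOpposite.comul_def, comul_antipode, hx]

end Antipode

section AntiYetterDrinfeld

open HopfAlgebra WithConv

section DualTensor

variable {R H : Type*} [CommSemiring R] [AddCommMonoid H] [Module R H]

variable (R H) in
/-- The identification of `Hom(H, R) ⊗ H` with the space `WithConv (H →ₗ[R] R) ⊗ H`, whose first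
factor carries the convolution product. -/
noncomputable def dualTensorEquiv :
    Module.Dual R H ⊗[R] H ≃ₗ[R] WithConv (H →ₗ[R] R) ⊗[R] H :=
  TensorProduct.congr (WithConv.linearEquiv R (H →ₗ[R] R)).symm (.refl R H)

@[simp]
theorem dualTensorEquiv_tmul (φ : Module.Dual R H) (h : H) :
    dualTensorEquiv R H (φ ⊗ₜ h) = toConv φ ⊗ₜ h := rfl

@[simp]
theorem dualTensorEquiv_symm_tmul (f : WithConv (H →ₗ[R] R)) (h : H) :
    (dualTensorEquiv R H).symm (f ⊗ₜ h) = f.ofConv ⊗ₜ h := rfl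

end DualTensor

theorem dualTensorEquiv_counit_tmul_one {R H : Type*} [CommSemiring R] [Semiring H]
    [Bialgebra R H] :
    dualTensorEquiv R H (Coalgebra.counit ⊗ₜ 1) = 1 ⊗ₜ 1 := rfl

variable {R H : Type*} [CommSemiring R] [Semiring H] [HopfAlgebra R H]
  (hS : Function.Bijective (antipode R (A := H)))

/-- The coaction `h ↦ (S² h₍₁₎ ⊗ op (S⁻¹ h₍₃₎)) ⊗ h₍₂₎` of `H ⊗ Hᵐᵒᵖ` on `H`. -/
noncomputable def aydComoduleAlgebra : ComoduleAlgebra R (H ⊗[R] Hᵐᵒᵖ) H :=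
  twoSidedComoduleAlgebra counit_comp_antipodeSq (counit_comp_opAntipodeInv hS)
    comul_comp_antipodeSq (comul_comp_opAntipodeInv hS)

/-- The multiplication of `B_AYD(H)`: the smash product of the convolution algebra of `H` with `H`
over `H ⊗ Hᵐᵒᵖ`, transported to `Hom(H, R) ⊗ H`. -/
noncomputable def aydMul : Module.Dual R H ⊗[R] H →ₗ[R] Module.End R (Module.Dual R H ⊗[R] H) :=
  (dualTensorEquiv R H).symm.conj.toLinearMap ∘ₗ
    (convModuleAlgebra R H R).smashMul (aydComoduleAlgebra hS) ∘ₗ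
    (dualTensorEquiv R H).toLinearMap

theorem aydComoduleAlgebra_coact (h : H) :
    (aydComoduleAlgebra hS).coact h =
      outerLeft H (antipodeSq R H) (opAntipodeInv hS) (comul₂ R H h) := rfl

theorem aydMul_apply (x y : Module.Dual R H ⊗[R] H) :
    aydMul hS x y = (dualTensorEquiv R H).symm
      ((convModuleAlgebra R H R).smashMul (aydComoduleAlgebra hS)
        (dualTensorEquiv R H x) (dualTensorEquiv R H y)) := rfl

theorem aydMul_tmul_tmul (φ φ' : Module.Dual R H) {h : H} (h' : H) {n : ℕ} {A B C : Fin n → H}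
    (hΔ : comul₂ R H h = ∑ i, A i ⊗ₜ (B i ⊗ₜ C i)) :
    aydMul hS (φ ⊗ₜ h) (φ' ⊗ₜ h') =
      ∑ i, (toConv φ * precompMulMul R H R (antipodeSq R H (A i) ⊗ₜ opAntipodeInv hS (C i))
        (toConv φ')).ofConv ⊗ₜ (B i * h') := by
  simp [aydMul_apply, ModuleAlgebra.coactMulAlgHom_apply, aydComoduleAlgebra_coact, hΔ,
    convModuleAlgebra]

theorem aydMul_assoc (x y z : Module.Dual R H ⊗[R] H) :
    aydMul hS (aydMul hS x y) z = aydMul hS x (aydMul hS y z) := by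
  simp only [aydMul_apply, LinearEquiv.apply_symm_apply, ModuleAlgebra.smashMul_smashMul,
    Module.End.mul_apply]

theorem counit_tmul_one_aydMul (x : Module.Dual R H ⊗[R] H) :
    aydMul hS (Coalgebra.counit ⊗ₜ 1) x = x := by
  rw [aydMul_apply, dualTensorEquiv_counit_tmul_one, ModuleAlgebra.smashMul_one,
    Module.End.one_apply, LinearEquiv.symm_apply_apply]

theorem aydMul_counit_tmul_one (x : Module.Dual R H ⊗[R] H) :
    aydMul hS x (Coalgebra.counit ⊗ₜ 1) = x := by
  rw [aydMul_apply, dualTensorEquiv_counit_tmul_one, ModuleAlgebra.smashMul_apply_one,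
    LinearEquiv.symm_apply_apply]

end AntiYetterDrinfeld

theorem statement5_general (k : Type*) [CommSemiring k] (H : Type*) [Semiring H] [HopfAlgebra k H]
    (hS : Function.Bijective (HopfAlgebra.antipode k (A := H))) :
    ∃ mul : (Module.Dual k H ⊗[k] H) →ₗ[k] (Module.Dual k H ⊗[k] H) →ₗ[k]
        (Module.Dual k H ⊗[k] H),
      (∀ (φ φ' : Module.Dual k H) (h h' : H) (n : ℕ) (A B C : Fin n → H),
        comul₂ k H h = ∑ i : Fin n, A i ⊗ₜ[k] (B i ⊗ₜ[k] C i) →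
        ∀ ψ : Fin n → Module.Dual k H,
          (∀ (i : Fin n) (x : H) (m : ℕ) (P Q : Fin m → H),
            Coalgebra.comul (R := k) x = ∑ j : Fin m, P j ⊗ₜ[k] Q j →
            ψ i x = ∑ j : Fin m,
              φ (P j) * φ' (Function.invFun (HopfAlgebra.antipode k) (C i) * Q j *
                HopfAlgebra.antipode k (HopfAlgebra.antipode k (A i)))) →
          mul (φ ⊗ₜ[k] h) (φ' ⊗ₜ[k] h') = ∑ i : Fin n, ψ i ⊗ₜ[k] (B i * h')) ∧
      (∀ x y z : Module.Dual k H ⊗[k] H, mul (mul x y) z = mul x (mul y z)) ∧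
      (∀ x : Module.Dual k H ⊗[k] H,
        mul ((Coalgebra.counit (R := k) : Module.Dual k H) ⊗ₜ[k] (1 : H)) x = x ∧
        mul x ((Coalgebra.counit (R := k) : Module.Dual k H) ⊗ₜ[k] (1 : H)) = x) := by
  refine ⟨aydMul hS, fun φ φ' h h' n A B C hΔ ψ hψ ↦ ?_, aydMul_assoc hS,
    fun x ↦ ⟨counit_tmul_one_aydMul hS x, aydMul_counit_tmul_one hS x⟩⟩
  rw [aydMul_tmul_tmul hS φ φ' h' hΔ]
  congr! with i
  ext x
  obtain ⟨m, P, Q, hx⟩ := TensorProduct.exists_sum_tmul_eq (Coalgebra.comul (R := k) x)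
  rw [hψ i x m P Q hx, convMul_precompMulMul_apply hx]
  simp [unop_opAntipodeInv]

/-- Let `H` be a Hopf algebra with bijective antipode `S`.  On
`B := Hom_k(H,k) ⊗ H` the multiplication determined (in Sweedler notation) by
`(φ ⊗ h)·(φ' ⊗ h') = ψ ⊗ h₍₂₎h'` with
`ψ(x) = φ(x₍₁₎)·φ'(S⁻¹(h₍₃₎) x₍₂₎ S²(h₍₁₎))`
is associative with unit `ε ⊗ 1`.  The multiplication is encoded as a bilinear map
`mul` whose value on elementary tensors is characterized through arbitrary finite
(Sweedler) representations of `Δ²(h)` and of `Δ(x)`. -/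
theorem statement5 (k : Type*) [Field k] (H : Type*) [Ring H] [HopfAlgebra k H]
    (hS : Function.Bijective (antS k H)) :
    ∃ mul : (Module.Dual k H ⊗[k] H) →ₗ[k] (Module.Dual k H ⊗[k] H) →ₗ[k]
        (Module.Dual k H ⊗[k] H),
      (∀ (φ φ' : Module.Dual k H) (h h' : H) (n : ℕ) (A B C : Fin n → H),
        Delta2 k H h = ∑ i : Fin n, A i ⊗ₜ[k] (B i ⊗ₜ[k] C i) →
        ∀ ψ : Fin n → Module.Dual k H,
          (∀ (i : Fin n) (x : H) (m : ℕ) (P Q : Fin m → H),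
            Coalgebra.comul (R := k) x = ∑ j : Fin m, P j ⊗ₜ[k] Q j →
            ψ i x = ∑ j : Fin m,
              φ (P j) * φ' (antSinv k H (C i) * Q j * antS k H (antS k H (A i)))) →
          mul (φ ⊗ₜ[k] h) (φ' ⊗ₜ[k] h') = ∑ i : Fin n, ψ i ⊗ₜ[k] (B i * h')) ∧
      (∀ x y z : Module.Dual k H ⊗[k] H, mul (mul x y) z = mul x (mul y z)) ∧
      (∀ x : Module.Dual k H ⊗[k] H,
        mul ((Coalgebra.counit (R := k) : Module.Dual k H) ⊗ₜ[k] (1 : H)) x = x ∧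
        mul x ((Coalgebra.counit (R := k) : Module.Dual k H) ⊗ₜ[k] (1 : H)) = x) :=
  statement5_general k H hS
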